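/- There exists an absolute constant C > 0 such that for all integers n ≥ m ≥ 1, writing u = n/m, one has | log ρ(u) + u·ξ(u)/(2m) − log ρ( u − u/(2m) ) | ≤ C·( u/m² + 1/m ). -/

import Mathlib

open Real

noncomputable section

/-- Predicate characterizing the Dickman function `ρ : [0,∞) → (0,∞)`:
continuous on `[0,∞)`, positive, equal to `1` on `[0,1]`, and satisfying the
delay differential equation `t·ρ'(t) + ρ(t-1) = 0` for `t > 1`. -/
def IsDickman (ρ : ℝ → ℝ) : Prop :=
  ContinuousOn ρ (Set.Ici 0) ∧
  (∀ t : ℝ, 0 ≤ t → 0 < ρ t) ∧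
  (∀ t ∈ Set.Icc (0:ℝ) 1, ρ t = 1) ∧
  (∀ t : ℝ, 1 < t → HasDerivAt ρ (-(ρ (t - 1)) / t) t)

/-- `ξ(u)`: for `u > 1`, the unique positive solution of `e^ξ = 1 + u·ξ`; otherwise `0`. -/
def xi (u : ℝ) : ℝ :=
  open Classical in
  if h : ∃ x : ℝ, 0 < x ∧ Real.exp x = 1 + u * x then h.choose else 0

/-- `p_{n,m}`: probability that a uniformly random permutation of `{1,…,n}` is `m`-friable,
i.e. has no cycle of length greater than `m`. -/
def permProb (n m : ℕ) : ℝ :=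
  (Nat.card {σ : Equiv.Perm (Fin n) // ∀ c ∈ σ.cycleType, c ≤ m} : ℝ) /
    (Nat.factorial n : ℝ)

/-- `p_{n,m,q}`: proportion of monic polynomials of degree `n` over a finite field `F`
(of cardinality `q`) that are `m`-friable, i.e. all of whose monic irreducible factors
have degree at most `m`. -/
def polyProb (F : Type) [Field F] [Fintype F] (n m : ℕ) : ℝ :=
  (Nat.card {f : Polynomial F // f.Monic ∧ f.natDegree = n ∧
      ∀ p : Polynomial F, p.Monic → Irreducible p → p ∣ f → p.natDegree ≤ m} : ℝ) /
    (Fintype.card F : ℝ) ^ n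

/-- `F_q(z) = ∏_{deg P ≤ m} (1 - (z/q)^{deg P})⁻¹`, the product over monic irreducible
polynomials `P` over `F` of degree at most `m`. -/
def FqFun (F : Type) [Field F] [Fintype F] (m : ℕ) (z : ℝ) : ℝ :=
  ∏ᶠ p ∈ {p : Polynomial F | p.Monic ∧ Irreducible p ∧ p.natDegree ≤ m},
    (1 - (z / (Fintype.card F : ℝ)) ^ p.natDegree)⁻¹

/-- `G_q(z) = F_q(z) · exp(-∑_{i=1}^m z^i/i)`. -/
def Gq (F : Type) [Field F] [Fintype F] (m : ℕ) (z : ℝ) : ℝ :=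
  FqFun F m z * Real.exp (-(∑ i ∈ Finset.Icc 1 m, z ^ i / (i : ℝ)))

/-- The coefficients `d_{m,i}`. -/
def dcoef (m i : ℕ) : ℝ :=
  if i = m then -(1 / (m : ℝ)) * ∑ j ∈ Finset.Icc 2 m, (1 : ℝ) / (j : ℝ)
  else Real.Gamma ((i : ℝ) + (i : ℝ) / (m : ℝ)) /
    (((m : ℝ) - (i : ℝ)) * (Nat.factorial i : ℝ) * Real.Gamma (1 + (i : ℝ) / (m : ℝ)))

/-- `T(s) = ∫₀^s ((e^t - 1)/t)·((t/m)/(1 - e^{-t/m}) - 1) dt`, integrand extended by `0` at `t = 0`. -/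
def Tfun (m : ℕ) (s : ℝ) : ℝ :=
  ∫ t in (0:ℝ)..s,
    if t = 0 then 0 else
      ((Real.exp t - 1) / t) * ((t / (m : ℝ)) / (1 - Real.exp (-t / (m : ℝ))) - 1)

end


/-- `sinh x / x` is nondecreasing on `(0, ∞)`. -/
lemma sinh_div_mono {x y : ℝ} (hx : 0 < x) (hxy : x ≤ y) :
    Real.sinh x / x ≤ Real.sinh y / y := by
  have hd : ∀ z : ℝ, 0 < z → HasDerivAt (fun z => Real.sinh z / z)
      ((Real.cosh z * z - Real.sinh z * 1) / z ^ 2) z := fun z hz =>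
    (Real.hasDerivAt_sinh z).div (hasDerivAt_id z) hz.ne'
  have hnum : MonotoneOn (fun z => Real.cosh z * z - Real.sinh z) (Set.Ici 0) := by
    apply monotoneOn_of_deriv_nonneg (convex_Ici 0)
    · fun_prop
    · fun_prop
    · intro z hz
      rw [interior_Ici] at hz
      have hz' : (0:ℝ) < z := hz
      have h1 : HasDerivAt (fun z => Real.cosh z * z - Real.sinh z)
          (Real.sinh z * z + Real.cosh z * 1 - Real.cosh z) z :=
        ((Real.hasDerivAt_cosh z).mul (hasDerivAt_id z)).sub (Real.hasDerivAt_sinh z)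
      rw [h1.deriv]
      have := mul_pos (Real.sinh_pos_iff.2 hz') hz'
      linarith
  have hm : MonotoneOn (fun z => Real.sinh z / z) (Set.Ioi 0) := by
    apply monotoneOn_of_deriv_nonneg (convex_Ioi 0)
    · exact fun z hz => (hd z hz).continuousAt.continuousWithinAt
    · rw [interior_Ioi]
      exact fun z hz => (hd z hz).differentiableAt.differentiableWithinAt
    · intro z hz
      rw [interior_Ioi] at hz
      have hz' : (0:ℝ) < z := hz
      rw [(hd z hz).deriv]
      have := hnum (Set.mem_Ici.2 le_rfl) (Set.mem_Ici.2 hz'.le) hz'.le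
      simp only [mul_zero, Real.sinh_zero, sub_zero] at this
      apply div_nonneg _ (by positivity)
      linarith
  exact hm hx (lt_of_lt_of_le hx hxy) hxy

lemma exp_sub_one_eq (x : ℝ) : Real.exp x - 1 = 2 * Real.exp (x/2) * Real.sinh (x/2) := by
  rw [Real.sinh_eq, show Real.exp x = Real.exp (x/2) * Real.exp (x/2) by
    rw [← Real.exp_add]; ring_nf]
  have : Real.exp (x/2) * Real.exp (-(x/2)) = 1 := by rw [← Real.exp_add]; simp
  linear_combination this

/-- growth of `(e^x-1)/x`. -/
lemma slope_growth {x y : ℝ} (hx : 0 < x) (hxy : x ≤ y) :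
    (Real.exp x - 1) / x * (1 + (y - x) / 2) ≤ (Real.exp y - 1) / y := by
  have hy : 0 < y := lt_of_lt_of_le hx hxy
  have h1 := sinh_div_mono (x := x/2) (y := y/2) (by linarith) (by linarith)
  have hf : ∀ z : ℝ, (Real.exp z - 1) / z = Real.exp (z/2) * (Real.sinh (z/2) / (z/2)) := by
    intro z
    rw [exp_sub_one_eq]
    field_simp
  rw [hf, hf]
  have h2 : Real.exp (y/2) = Real.exp (x/2) * Real.exp ((y-x)/2) := by
    rw [← Real.exp_add]; ring_nf
  have h3 : 1 + (y-x)/2 ≤ Real.exp ((y-x)/2) := by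
    linarith [Real.add_one_le_exp ((y-x)/2)]
  have h4 : 0 ≤ Real.sinh (x/2) / (x/2) :=
    div_nonneg (Real.sinh_nonneg_iff.2 (by linarith)) (by linarith)
  rw [h2]
  calc Real.exp (x/2) * (Real.sinh (x/2) / (x/2)) * (1 + (y-x)/2)
      ≤ Real.exp (x/2) * (Real.sinh (x/2) / (x/2)) * Real.exp ((y-x)/2) := by gcongr
    _ = Real.exp (x/2) * Real.exp ((y-x)/2) * (Real.sinh (x/2) / (x/2)) := by ring
    _ ≤ _ := by gcongr

lemma xi_exists {u : ℝ} (hu : 1 < u) : ∃ x : ℝ, 0 < x ∧ Real.exp x = 1 + u * x := by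
  have hu0 : 0 < u := by linarith
  have hl : 0 < Real.log u := Real.log_pos hu
  have hc : ContinuousOn (fun x => Real.exp x - (1 + u * x)) (Set.Icc (Real.log u) (2*u)) := by
    fun_prop
  have hlu : Real.log u ≤ 2 * u := by linarith [Real.log_le_sub_one_of_pos hu0]
  have h := intermediate_value_Icc hlu hc
  have h0 : (0:ℝ) ∈ Set.Icc (Real.exp (Real.log u) - (1 + u * Real.log u))
      (Real.exp (2*u) - (1 + u * (2*u))) := by
    constructor
    · rw [Real.exp_log hu0]
      have h1 := Real.log_le_sub_one_of_pos (inv_pos.2 hu0)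
      rw [Real.log_inv] at h1
      have h2 : u * u⁻¹ = 1 := mul_inv_cancel₀ hu0.ne'
      nlinarith
    · have := Real.quadratic_le_exp_of_nonneg (x := 2*u) (by linarith)
      nlinarith
  obtain ⟨x, hx, hx0⟩ := h h0
  exact ⟨x, lt_of_lt_of_le hl hx.1, by simp only at hx0; linarith⟩

lemma xi_spec {u : ℝ} (hu : 1 < u) : 0 < xi u ∧ Real.exp (xi u) = 1 + u * xi u := by
  unfold xi
  rw [dif_pos (xi_exists hu)]
  exact (xi_exists hu).choose_spec

lemma xi_slope {u : ℝ} (hu : 1 < u) : (Real.exp (xi u) - 1) / xi u = u := by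
  obtain ⟨h1, h2⟩ := xi_spec hu
  rw [h2]; field_simp; ring

lemma xi_one : xi 1 = 0 := by
  unfold xi
  rw [dif_neg]
  rintro ⟨x, hx, h⟩
  have := Real.add_one_lt_exp hx.ne'
  linarith

/-- If `f(z) ≥ t` then `ξ(t) ≤ z`. -/
lemma xi_le {t z : ℝ} (ht : 1 < t) (hz : 0 < z) (h : t ≤ (Real.exp z - 1) / z) : xi t ≤ z := by
  by_contra! hlt
  have h1 := slope_growth hz hlt.le
  rw [xi_slope ht] at h1
  nlinarith

lemma le_xi {t z : ℝ} (ht : 1 < t) (h : (Real.exp z - 1) / z ≤ t) : z ≤ xi t := by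
  by_contra! hlt
  have h1 := slope_growth (xi_spec ht).1 hlt.le
  rw [xi_slope ht] at h1
  nlinarith

lemma xi_lip {a b : ℝ} (ha : 1 < a) (hab : a ≤ b) : xi b - xi a ≤ 2 * (b - a) / a := by
  have hb : 1 < b := by linarith
  have ha0 : 0 < a := by linarith
  rw [le_div_iff₀ ha0]
  rcases le_total (xi a) (xi b) with h | h
  · have h1 := slope_growth (xi_spec ha).1 h
    rw [xi_slope ha, xi_slope hb] at h1
    linarith
  · nlinarith

lemma xi_le_two {t : ℝ} (ht : 1 < t) (h2 : t ≤ 2) : xi t ≤ 2 := by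
  apply xi_le ht (by norm_num)
  have : Real.exp 2 = Real.exp 1 * Real.exp 1 := by rw [← Real.exp_add]; norm_num
  have := Real.exp_one_gt_d9
  have : (5:ℝ) ≤ Real.exp 2 := by nlinarith
  linarith

lemma xi_le_four {t : ℝ} (ht : 1 ≤ t) (h2 : t ≤ 4) : xi t ≤ 4 := by
  rcases ht.eq_or_lt with rfl | ht
  · rw [xi_one]; norm_num
  apply xi_le ht (by norm_num)
  have h4 : Real.exp 4 = Real.exp 1 ^ 4 := by rw [← Real.exp_nat_mul]; norm_num
  have h1 := Real.exp_one_gt_d9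
  have : (2.5:ℝ)^4 ≤ Real.exp 1 ^ 4 := by gcongr; linarith
  rw [← h4] at this
  norm_num at this
  linarith

lemma xi_step {u : ℝ} (hu : 1 ≤ u) : xi (u+1) - xi u ≤ 2 / u := by
  rcases hu.eq_or_lt with rfl | hu
  · rw [xi_one]
    have := xi_le_two (t := 1+1) (by norm_num) (by norm_num)
    norm_num at *
    exact this
  · have := xi_lip hu (b := u+1) (by linarith)
    simpa using this

section dick
variable {ρ : ℝ → ℝ}

/-- Minus the logarithmic derivative of `ρ`. -/
noncomputable def rr (ρ : ℝ → ℝ) (t : ℝ) : ℝ := ρ (t - 1) / (t * ρ t)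

/-- Primitive of `ρ`. -/
noncomputable def PP (ρ : ℝ → ℝ) (t : ℝ) : ℝ := ∫ s in (0:ℝ)..t, ρ |s|

lemma cont_abs (h : IsDickman ρ) : Continuous (fun s => ρ |s|) := by
  have := h.1.comp_continuous continuous_abs (fun x => abs_nonneg x)
  exact this

lemma PP_deriv (h : IsDickman ρ) {t : ℝ} (ht : 0 ≤ t) : HasDerivAt (PP ρ) (ρ t) t := by
  have h1 := ((cont_abs h).integral_hasStrictDerivAt 0 t).hasDerivAt
  rw [abs_of_nonneg ht] at h1
  exact h1

lemma rho_pos (h : IsDickman ρ) {t : ℝ} (ht : 0 ≤ t) : 0 < ρ t := h.2.1 t ht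

lemma rho_cont (h : IsDickman ρ) {a b : ℝ} (ha : 0 ≤ a) : ContinuousOn ρ (Set.Icc a b) :=
  h.1.mono (fun _ hx => le_trans ha hx.1)

lemma rr_pos (h : IsDickman ρ) {t : ℝ} (ht : 1 ≤ t) : 0 < rr ρ t :=
  div_pos (rho_pos h (by linarith)) (mul_pos (by linarith) (rho_pos h (by linarith)))

lemma rho_deriv (h : IsDickman ρ) {t : ℝ} (ht : 1 < t) :
    HasDerivAt ρ (-(rr ρ t * ρ t)) t := by
  convert h.2.2.2 t ht using 1
  have := rho_pos h (t := t) (by linarith)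
  unfold rr
  field_simp

lemma PP_identity (h : IsDickman ρ) {t : ℝ} (ht : 1 ≤ t) :
    t * ρ t = PP ρ t - PP ρ (t - 1) := by
  have h1 : 1 * ρ 1 - PP ρ 1 + PP ρ (1 - 1) = 0 := by
    have e : PP ρ 1 = 1 := by
      unfold PP
      have : ∫ s in (0:ℝ)..1, ρ |s| = ∫ s in (0:ℝ)..1, (1:ℝ) := by
        apply intervalIntegral.integral_congr
        intro s hs
        rw [Set.uIcc_of_le zero_le_one] at hs
        simp only
        rw [abs_of_nonneg hs.1]
        exact h.2.2.1 s hs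
      rw [this]; simp
    rw [e, h.2.2.1 1 (by simp)]
    simp [PP]
  rcases ht.eq_or_lt with rfl | ht
  · linarith
  have hdP : ∀ s : ℝ, 1 ≤ s → HasDerivAt (fun s => PP ρ (s-1)) (ρ (s-1)) s := by
    intro s hs
    exact (PP_deriv h (t := s - 1) (by linarith)).comp_sub_const s 1
  obtain ⟨c, hc, hc2⟩ := exists_hasDerivAt_eq_slope
    (fun t => t * ρ t - PP ρ t + PP ρ (t-1)) (fun _ => 0) ht
    (by
      refine ((continuousOn_id.mul (rho_cont h (by norm_num))).sub ?_).add ?_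
      · exact fun s hs => (PP_deriv h (by linarith [hs.1])).continuousAt.continuousWithinAt
      · exact fun s hs => (hdP s hs.1).continuousAt.continuousWithinAt)
    (by
      intro s hs
      have := (((hasDerivAt_id s).mul (h.2.2.2 s hs.1)).sub
        (PP_deriv h (t := s) (by linarith [hs.1]))).add (hdP s hs.1.le)
      refine HasDerivAt.congr_deriv
        (f := fun t => t * ρ t - PP ρ t + PP ρ (t-1)) this ?_
      have : s ≠ 0 := by linarith [hs.1]
      simp only [id]
      field_simp
      ring)
  have h3 : t - 1 ≠ 0 := by linarith
  have hc2 := hc2.symm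
  rw [div_eq_zero_iff] at hc2
  rcases hc2 with h4 | h4
  · linarith
  · exact absurd h4 h3

lemma rr_cont (h : IsDickman ρ) : ContinuousOn (rr ρ) (Set.Ici 1) := by
  unfold rr
  refine ContinuousOn.div ?_ ?_ ?_
  · exact h.1.comp (f := fun t : ℝ => t - 1) (by fun_prop) (fun s hs => by
      simp only [Set.mem_Ici] at *; linarith)
  · exact continuousOn_id.mul (h.1.mono (fun s hs => by simp only [Set.mem_Ici] at *; linarith))
  · intro s hs
    have hs : (1:ℝ) ≤ s := hs
    exact (mul_pos (by linarith) (rho_pos h (by linarith))).ne'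

lemma rho_antitone (h : IsDickman ρ) : StrictAntiOn ρ (Set.Ici 1) := by
  apply strictAntiOn_of_deriv_neg (convex_Ici 1)
  · exact h.1.mono (fun s hs => by simp only [Set.mem_Ici] at *; linarith)
  · intro t ht
    rw [interior_Ici] at ht
    have ht : (1:ℝ) < t := ht
    rw [(rho_deriv h ht).deriv]
    have := mul_pos (rr_pos h ht.le) (rho_pos h (t := t) (by linarith))
    linarith

lemma rr_mono12 (h : IsDickman ρ) : StrictMonoOn (rr ρ) (Set.Icc 1 2) := by
  have h1 : StrictAntiOn (fun t => t * ρ t) (Set.Icc 1 2) := by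
    apply strictAntiOn_of_deriv_neg (convex_Icc 1 2)
    · exact continuousOn_id.mul (rho_cont h (by norm_num))
    · intro t ht
      rw [interior_Icc] at ht
      have := ((hasDerivAt_id t).mul (h.2.2.2 t ht.1))
      have hh : deriv (fun t => t * ρ t) t = _ := this.deriv
      rw [hh]
      have e1 : ρ (t-1) = 1 := h.2.2.1 _ ⟨by linarith [ht.1], by linarith [ht.2]⟩
      have e2 : ρ t < ρ 1 := rho_antitone h (Set.mem_Ici.2 le_rfl) (Set.mem_Ici.2 ht.1.le) ht.1
      rw [h.2.2.1 1 (by simp)] at e2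
      have : t ≠ 0 := by linarith [ht.1]
      simp only [id, e1]
      field_simp
      linarith
  intro a ha b hb hab
  have hlt := h1 ha hb hab
  simp only at hlt
  unfold rr
  rw [h.2.2.1 (a-1) ⟨by linarith [ha.1], by linarith [ha.2]⟩,
    h.2.2.1 (b-1) ⟨by linarith [hb.1], by linarith [hb.2]⟩]
  apply one_div_lt_one_div_of_lt _ hlt
  exact mul_pos (by linarith [hb.1]) (rho_pos h (by linarith [hb.1]))

lemma rr_gap (h : IsDickman ρ) {t : ℝ} (ht : 2 ≤ t)
    (hm : StrictMonoOn (rr ρ) (Set.Icc (t-1) t)) : 0 < rr ρ t - rr ρ (t-1) - 1 / t := by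
  set c := rr ρ (t-1) with hc
  have hK : StrictAntiOn (fun s => ρ s + c * PP ρ s) (Set.Icc (t-1) t) := by
    apply strictAntiOn_of_deriv_neg (convex_Icc _ _)
    · refine (rho_cont h (by linarith)).add (continuousOn_const.mul ?_)
      exact fun s hs => (PP_deriv h (by linarith [hs.1])).continuousAt.continuousWithinAt
    · intro s hs
      rw [interior_Icc] at hs
      have h1 := (rho_deriv h (t := s) (by linarith [hs.1])).add
        ((PP_deriv h (t := s) (by linarith [hs.1])).const_mul c)
      have hh : deriv (fun s => ρ s + c * PP ρ s) s = _ := h1.deriv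
      rw [hh]
      have h2 : c < rr ρ s := hm ⟨le_rfl, by linarith⟩ ⟨hs.1.le, hs.2.le⟩ hs.1
      have h3 := rho_pos h (t := s) (by linarith [hs.1])
      nlinarith
  have h1 := hK ⟨le_rfl, by linarith⟩ ⟨by linarith, le_rfl⟩ (by linarith : t - 1 < t)
  simp only at h1
  have h2 := PP_identity h (t := t) (by linarith)
  have h3 := rho_pos h (t := t) (by linarith)
  have h4 : ρ (t-1) = rr ρ t * (t * ρ t) := by
    unfold rr; field_simp
  have h5 : c * (t * ρ t) < rr ρ t * (t * ρ t) - ρ t := by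
    rw [← h4, h2]; linarith
  have h6 : c * t < rr ρ t * t - 1 := by
    have : (c * t) * ρ t < (rr ρ t * t - 1) * ρ t := by linarith
    exact lt_of_mul_lt_mul_right this h3.le
  have ht0 : 0 < t := by linarith
  have : rr ρ t - c - 1 / t = (rr ρ t * t - 1 - c * t) / t := by field_simp; ring
  rw [this]
  exact div_pos (by linarith) ht0

lemma rr_deriv (h : IsDickman ρ) {t : ℝ} (ht : 2 < t) :
    HasDerivAt (rr ρ) (rr ρ t * (rr ρ t - rr ρ (t-1) - 1 / t)) t := by
  have h1 := (rho_deriv h (t := t-1) (by linarith)).comp_sub_const t 1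
  have h2 := (hasDerivAt_id t).mul (rho_deriv h (t := t) (by linarith))
  have h3 := rho_pos h (t := t) (by linarith)
  have h4 := rho_pos h (t := t-1) (by linarith)
  have ht0 : t ≠ 0 := by linarith
  have h5 := h1.div h2 (mul_ne_zero ht0 h3.ne')
  have h6 : HasDerivAt (rr ρ) _ t := h5
  convert h6 using 1
  have e : ρ (t-1) = rr ρ t * (t * ρ t) := by
    unfold rr; field_simp
  simp only [id, Pi.mul_apply]
  rw [e]
  field_simp
  ring

lemma rr_mono_of_gap (h : IsDickman ρ) {T : ℝ} (hT : 2 ≤ T)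
    (hg : ∀ t, 2 < t → t < T → 0 < rr ρ t - rr ρ (t-1) - 1 / t) :
    StrictMonoOn (rr ρ) (Set.Icc 1 T) := by
  have h2 : StrictMonoOn (rr ρ) (Set.Icc 2 T) := by
    apply strictMonoOn_of_deriv_pos (convex_Icc _ _)
    · exact (rr_cont h).mono (fun s hs => by
        simp only [Set.mem_Icc, Set.mem_Ici] at *; linarith)
    · intro s hs
      rw [interior_Icc] at hs
      rw [(rr_deriv h hs.1).deriv]
      exact mul_pos (rr_pos h (by linarith [hs.1])) (hg s hs.1 hs.2)
  have h3 := (rr_mono12 h).union h2 (c := 2) ⟨⟨by norm_num, le_rfl⟩, fun x hx => hx.2⟩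
    ⟨⟨le_rfl, hT⟩, fun x hx => hx.1⟩
  rwa [Set.Icc_union_Icc_eq_Icc (by norm_num) hT] at h3

lemma rr_mono (h : IsDickman ρ) : StrictMonoOn (rr ρ) (Set.Ici 1) := by
  have hG : ∀ t, 2 ≤ t → 0 < rr ρ t - rr ρ (t-1) - 1 / t := by
    by_contra! hcon
    obtain ⟨t₁, ht₁, hb⟩ := hcon
    have hcont : ContinuousOn (fun t => rr ρ t - rr ρ (t-1) - 1 / t) (Set.Ici 2) := by
      refine (((rr_cont h).mono ?_).sub ?_).sub ?_
      · intro s hs; simp only [Set.mem_Ici] at *; linarith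
      · exact (rr_cont h).comp (f := fun t : ℝ => t - 1) (by fun_prop) (fun s hs => by
          simp only [Set.mem_Ici] at *; linarith)
      · refine continuousOn_const.div continuousOn_id ?_
        intro s hs
        simp only [Set.mem_Ici, id] at *
        linarith
    set S := Set.Ici (2:ℝ) ∩ (fun t => rr ρ t - rr ρ (t-1) - 1 / t) ⁻¹' Set.Iic 0 with hS
    have hclosed : IsClosed S := hcont.preimage_isClosed_of_isClosed isClosed_Ici isClosed_Iic
    have hne : S.Nonempty := ⟨t₁, ht₁, hb⟩
    have hbdd : BddBelow S := ⟨2, fun x hx => hx.1⟩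
    have hmem := hclosed.csInf_mem hne hbdd
    set T := sInf S
    have hT2 : 2 ≤ T := hmem.1
    have hmono := rr_mono_of_gap h hT2 (fun t ht htT => by
      by_contra! hle
      exact absurd (csInf_le hbdd (show t ∈ S from ⟨ht.le, hle⟩)) (not_le.2 htT))
    have := rr_gap h hT2 (hmono.mono (Set.Icc_subset_Icc (by linarith) le_rfl))
    exact absurd hmem.2 (not_le.2 this)
  intro a ha b hb hab
  have ha : (1:ℝ) ≤ a := ha
  exact rr_mono_of_gap h (T := max 2 b) (le_max_left _ _) (fun t ht _ => hG t ht.le)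
    ⟨ha, le_trans hab.le (le_max_right _ _)⟩ ⟨by linarith, le_max_right _ _⟩ hab

lemma expaux (c T s : ℝ) : HasDerivAt (fun s => Real.exp (c * (T - s)))
    (-c * Real.exp (c * (T - s))) s := by
  have := ((((hasDerivAt_id s).const_sub T).const_mul c)).exp
  refine HasDerivAt.congr_deriv (f := fun s => Real.exp (c * (T - s))) this ?_
  change Real.exp (c * (T - s)) * (c * -1) = _
  ring

/-- `r(T-1) ≤ ξ(T)`. -/
lemma rr_le_xi (h : IsDickman ρ) {t : ℝ} (ht : 1 ≤ t) : rr ρ t ≤ xi (t + 1) := by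
  set c := rr ρ t with hc
  have hc0 : 0 < c := rr_pos h ht
  have hT : 0 < ρ (t+1) := rho_pos h (by linarith)
  -- lower bound for ρ
  have h1 : AntitoneOn (fun s => ρ s * Real.exp (c * s)) (Set.Icc t (t+1)) := by
    apply antitoneOn_of_deriv_nonpos (convex_Icc _ _)
    · exact (rho_cont h (by linarith)).mul (by fun_prop)
    · intro s hs
      rw [interior_Icc] at hs
      exact ((rho_deriv h (by linarith [hs.1])).differentiableAt.mul
        (by fun_prop)).differentiableWithinAt
    · intro s hs
      rw [interior_Icc] at hs
      have hd := (rho_deriv h (t := s) (by linarith [hs.1])).mul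
        ((hasDerivAt_id s).const_mul c).exp
      have hh : deriv (fun s => ρ s * Real.exp (c * s)) s = _ := hd.deriv
      rw [hh]
      have h2 : c < rr ρ s := rr_mono h (Set.mem_Ici.2 ht)
        (Set.mem_Ici.2 (by linarith [hs.1])) hs.1
      have h3 := mul_pos (rho_pos h (t := s) (by linarith [hs.1])) (Real.exp_pos (c * s))
      simp only [id]
      nlinarith
  have h2 : ∀ s ∈ Set.Icc t (t+1), ρ (t+1) * Real.exp (c * (t + 1 - s)) ≤ ρ s := by
    intro s hs
    have := h1 hs ⟨by linarith, le_rfl⟩ hs.2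
    simp only at this
    rw [show c * (t+1-s) = c * (t+1) - c * s by ring, Real.exp_sub, ← mul_div_assoc,
      div_le_iff₀ (Real.exp_pos _)]
    exact this
  have hd : ∀ s, 0 ≤ s → HasDerivAt (fun s => c * PP ρ s + ρ (t+1) * Real.exp (c * (t+1-s)))
      (c * ρ s + ρ (t+1) * (-c * Real.exp (c * (t+1-s)))) s := fun s hs =>
    ((PP_deriv h hs).const_mul c).add ((expaux c (t+1) s).const_mul _)
  have h3 : MonotoneOn (fun s => c * PP ρ s + ρ (t+1) * Real.exp (c * (t+1-s)))
      (Set.Icc t (t+1)) := by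
    apply monotoneOn_of_deriv_nonneg (convex_Icc _ _)
    · exact fun s hs => (hd s (by linarith [hs.1])).continuousAt.continuousWithinAt
    · intro s hs
      rw [interior_Icc] at hs
      exact (hd s (by linarith [hs.1])).differentiableAt.differentiableWithinAt
    · intro s hs
      rw [interior_Icc] at hs
      rw [(hd s (by linarith [hs.1])).deriv]
      have := h2 s ⟨hs.1.le, hs.2.le⟩
      nlinarith
  have h4 := h3 ⟨le_rfl, by linarith⟩ ⟨by linarith, le_rfl⟩ (by linarith : t ≤ t + 1)
  have h5 := PP_identity h (t := t+1) (by linarith)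
  simp only [add_sub_cancel_left, mul_one, sub_self, mul_zero, Real.exp_zero,
    add_sub_cancel_right] at h4 h5
  apply le_xi (by linarith)
  rw [div_le_iff₀ hc0]
  have h6 : ρ (t+1) * (Real.exp c - 1) ≤ ρ (t+1) * ((t+1) * c) := by
    have : ρ (t+1) * ((t+1) * c) = c * (PP ρ (t+1) - PP ρ t) := by rw [← h5]; ring
    rw [this]; linarith
  exact le_of_mul_le_mul_left h6 hT

lemma xi_le_rr (h : IsDickman ρ) {t : ℝ} (ht : 2 ≤ t) : xi t ≤ rr ρ t := by
  set c := rr ρ t with hc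
  have hc0 : 0 < c := rr_pos h (by linarith)
  have hT : 0 < ρ t := rho_pos h (by linarith)
  have h1 : MonotoneOn (fun s => ρ s * Real.exp (c * s)) (Set.Icc (t-1) t) := by
    apply monotoneOn_of_deriv_nonneg (convex_Icc _ _)
    · exact (rho_cont h (by linarith)).mul (by fun_prop)
    · intro s hs
      rw [interior_Icc] at hs
      exact ((rho_deriv h (by linarith [hs.1])).differentiableAt.mul
        (by fun_prop)).differentiableWithinAt
    · intro s hs
      rw [interior_Icc] at hs
      have hd := (rho_deriv h (t := s) (by linarith [hs.1])).mul
        ((hasDerivAt_id s).const_mul c).exp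
      have hh : deriv (fun s => ρ s * Real.exp (c * s)) s = _ := hd.deriv
      rw [hh]
      have h2 : rr ρ s < c := rr_mono h (Set.mem_Ici.2 (by linarith [hs.1]))
        (Set.mem_Ici.2 (by linarith)) hs.2
      have h3 := mul_pos (rho_pos h (t := s) (by linarith [hs.1])) (Real.exp_pos (c * s))
      simp only [id]
      nlinarith
  have h2 : ∀ s ∈ Set.Icc (t-1) t, ρ s ≤ ρ t * Real.exp (c * (t - s)) := by
    intro s hs
    have := h1 hs ⟨by linarith, le_rfl⟩ hs.2
    simp only at this
    rw [show c * (t-s) = c * t - c * s by ring, Real.exp_sub, ← mul_div_assoc,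
      le_div_iff₀ (Real.exp_pos _)]
    exact this
  have hd : ∀ s, 0 ≤ s → HasDerivAt (fun s => c * PP ρ s + ρ t * Real.exp (c * (t-s)))
      (c * ρ s + ρ t * (-c * Real.exp (c * (t-s)))) s := fun s hs =>
    ((PP_deriv h hs).const_mul c).add ((expaux c t s).const_mul _)
  have h3 : AntitoneOn (fun s => c * PP ρ s + ρ t * Real.exp (c * (t-s)))
      (Set.Icc (t-1) t) := by
    apply antitoneOn_of_deriv_nonpos (convex_Icc _ _)
    · exact fun s hs => (hd s (by linarith [hs.1])).continuousAt.continuousWithinAt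
    · intro s hs
      rw [interior_Icc] at hs
      exact (hd s (by linarith [hs.1])).differentiableAt.differentiableWithinAt
    · intro s hs
      rw [interior_Icc] at hs
      rw [(hd s (by linarith [hs.1])).deriv]
      have := h2 s ⟨hs.1.le, hs.2.le⟩
      nlinarith
  have h4 := h3 ⟨le_rfl, by linarith⟩ ⟨by linarith, le_rfl⟩ (by linarith : t - 1 ≤ t)
  have h5 := PP_identity h (t := t) (by linarith)
  simp only [sub_sub_cancel, mul_one, sub_self, mul_zero, Real.exp_zero] at h4
  apply xi_le (by linarith) hc0
  rw [le_div_iff₀ hc0]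
  have h6 : ρ t * (t * c) ≤ ρ t * (Real.exp c - 1) := by
    have : ρ t * (t * c) = c * (PP ρ t - PP ρ (t-1)) := by rw [← h5]; ring
    rw [this]; linarith
  exact le_of_mul_le_mul_left h6 hT

/-- Mean value estimate for `log ρ`. -/
lemma log_mvt (h : IsDickman ρ) {a b : ℝ} (ha : 1 ≤ a) (hab : a < b) :
    (b - a) * rr ρ a ≤ Real.log (ρ a) - Real.log (ρ b) ∧
    Real.log (ρ a) - Real.log (ρ b) ≤ (b - a) * rr ρ b := by
  obtain ⟨c, hc, he⟩ := exists_hasDerivAt_eq_slope (fun t => Real.log (ρ t))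
    (fun t => - rr ρ t) hab
    ((rho_cont h (by linarith)).log (fun s hs => (rho_pos h (by linarith [hs.1])).ne'))
    (fun s hs => by
      have h0 := rho_pos h (t := s) (by linarith [hs.1])
      have := (rho_deriv h (t := s) (by linarith [hs.1])).log h0.ne'
      convert this using 1
      field_simp)
  have hb : 0 < b - a := by linarith
  rw [eq_div_iff hb.ne'] at he
  have h1 : rr ρ a < rr ρ c := rr_mono h ha (Set.mem_Ici.2 (by linarith [hc.1])) hc.1
  have h2 : rr ρ c < rr ρ b := rr_mono h (Set.mem_Ici.2 (by linarith [hc.1]))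
    (Set.mem_Ici.2 (by linarith)) hc.2
  constructor <;> nlinarith

end dick

/-- There exists an absolute constant `C > 0` such that for all integers
`n ≥ m ≥ 1`, writing `u = n/m`, one has
`|log ρ(u) + u·ξ(u)/(2m) − log ρ(u − u/(2m))| ≤ C·(u/m² + 1/m)`. -/
theorem stmt2 :
    ∃ C : ℝ, 0 < C ∧ ∀ n m : ℕ, 1 ≤ m → m ≤ n → ∀ ρ : ℝ → ℝ, IsDickman ρ →
      ∀ u : ℝ, u = (n : ℝ) / (m : ℝ) →
      |Real.log (ρ u) + u * xi u / (2 * (m : ℝ)) -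
          Real.log (ρ (u - u / (2 * (m : ℝ))))| ≤
        C * (u / (m : ℝ) ^ 2 + 1 / (m : ℝ)) := by
  refine ⟨8, by norm_num, ?_⟩
  intro n m hm hmn ρ hρ u hu
  have hm1 : (1:ℝ) ≤ m := by exact_mod_cast hm
  have hm0 : (0:ℝ) < m := by linarith
  have hu1 : 1 ≤ u := by
    rw [hu, le_div_iff₀ hm0, one_mul]; exact_mod_cast hmn
  clear hu
  generalize (m:ℝ) = M at *
  have hu0 : 0 < u := by linarith
  set k := u / (2 * M) with hk
  have hk0 : 0 < k := by positivity
  have hk2 : k ≤ u / 2 := by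
    rw [hk]; gcongr; linarith
  have e1 : u * xi u / (2 * M) = k * xi u := by rw [hk]; ring
  have ekM : k / u = 1 / (2 * M) := by rw [hk]; field_simp
  have ekk : k * k / u = u / M ^ 2 / 4 := by rw [hk]; field_simp; norm_num
  have p1 : 0 < u / M ^ 2 := by positivity
  have p2 : 0 < 1 / M := by positivity
  have p3 : 1 / (2 * M) = 1 / M / 2 := by field_simp
  rw [e1]
  -- upper bound for the drop
  have hup : Real.log (ρ (u - k)) - Real.log (ρ u) ≤ k * rr ρ u := by
    rcases le_or_gt 1 (u - k) with h1 | h1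
    · have := (log_mvt hρ h1 (b := u) (by linarith)).2
      simpa using this
    · rw [hρ.2.2.1 (u-k) ⟨by linarith, h1.le⟩]
      have hr := rr_pos hρ hu1
      rcases hu1.eq_or_lt with h2 | h2
      · rw [← h2, hρ.2.2.1 1 (by simp)]
        rw [← h2] at hr
        simp only [sub_self]
        positivity
      · have := (log_mvt hρ le_rfl h2).2
        rw [hρ.2.2.1 1 (by simp)] at this
        nlinarith
  have hdrop : 0 ≤ Real.log (ρ (u - k)) - Real.log (ρ u) := by
    have : ρ u ≤ ρ (u - k) := by
      rcases le_or_gt 1 (u - k) with h1 | h1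
      · exact (rho_antitone hρ).antitoneOn (Set.mem_Ici.2 h1) (Set.mem_Ici.2 hu1) (by linarith)
      · rw [hρ.2.2.1 (u-k) ⟨by linarith, h1.le⟩]
        have := (rho_antitone hρ).antitoneOn (Set.mem_Ici.2 le_rfl) (Set.mem_Ici.2 hu1) hu1
        rwa [hρ.2.2.1 1 (by simp)] at this
    have := Real.log_le_log (rho_pos hρ hu0.le) this
    linarith
  have hr1 := rr_le_xi hρ hu1
  have hstep := xi_step hu1
  rw [abs_le]
  constructor
  · have : k * rr ρ u ≤ k * (xi u + 2 / u) := by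
      apply mul_le_mul_of_nonneg_left _ hk0.le
      linarith
    have e : k * (xi u + 2 / u) = k * xi u + 2 * (k / u) := by ring
    rw [e, ekM, p3] at this
    linarith
  · rcases lt_or_ge u 4 with h4 | h4
    · have hx := xi_le_four hu1 h4.le
      have hkM : k ≤ 2 * (1 / M) := by
        have : k = u / 2 * (1 / M) := by rw [hk]; field_simp
        rw [this]; gcongr; linarith
      have : k * xi u ≤ 2 * (1 / M) * 4 := by
        calc k * xi u ≤ k * 4 := by gcongr
          _ ≤ _ := by gcongr
      linarith
    · have h2 : 2 ≤ u - k := by linarith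
      have hl := (log_mvt hρ (a := u - k) (by linarith) (b := u) (by linarith)).1
      have hx := xi_le_rr hρ h2
      have hlip := xi_lip (a := u - k) (b := u) (by linarith) (by linarith)
      rw [sub_sub_cancel] at hl hlip
      have h5 : 2 * k / (u - k) ≤ 4 * (k / u) := by
        rw [div_le_iff₀ (by linarith)]
        have : 4 * (k / u) * (u - k) = 4 * k - 4 * k * k / u := by field_simp
        have h6 : 4 * k * k / u ≤ 2 * k := by
          rw [div_le_iff₀ hu0]; nlinarith
        linarith
      have h7 : k * (xi u - rr ρ (u - k)) ≤ k * (4 * (k / u)) :=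
        mul_le_mul_of_nonneg_left (by linarith) hk0.le
      have e : k * (4 * (k / u)) = 4 * (k * k / u) := by ring
      rw [e, ekk] at h7
      linarith
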